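/- arXiv:1203.2238 — 2 statements merged into one kernel-verified Lean document; each statement's English description precedes it below -/
import Mathlib

section
/- Anisoperimetric inequality: for any anisotropy function σ and any closed curve Γ, L_σ(Γ)² ≥ 4|W_σ|·A(Γ). -/
open Real

/-- The Wulff area `|W_σ| = (1/2)∫₀^{2π} σ(ν)(σ(ν)+σ''(ν)) dν`. -/
noncomputable def wulffArea (σ : ℝ → ℝ) : ℝ :=
  (1 / 2) * ∫ ν in (0:ℝ)..(2 * π), σ ν * (σ ν + deriv (deriv σ) ν)

/-!
This is E. Schmidt's proof of the isoperimetric inequality with the Wulff shape in place of the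
disc. The boundary point of the Wulff shape with tangent angle `φ` is
`w φ = σ φ • n φ + σ' φ • t φ`, where `t = (cos, sin)` and `n = (sin, -cos)`. Since
`w' = (σ + σ'') • t`, the support function of the Wulff shape is `σ`, i.e. `⟪w φ, n ν⟫ ≤ σ ν` for
all `φ` and `ν`, and its boundary splits into a lower and an upper graph over the first
coordinate. Scale the Wulff shape by `r` so that it is as wide as the closed curve, translate it to
occupy the same vertical strip, and pair each point of the curve with a point of the scaled boundary
having the same first coordinate, changing graph when the curve passes its leftmost and rightmost
points. Integrating the support inequality along the curve gives `A + |W| r² ≤ r L`. As `|W| ≥ 0`,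
this forces `L² - 4 |W| A ≥ (L - 2 |W| r)² ≥ 0`.
-/

section ClosedCurve

variable {x y x' y' : ℝ → ℝ} {a b : ℝ}

lemma half_integral_cross_eq_integral_sub_mul_deriv (hx : ∀ u, HasDerivAt x (x' u) u)
    (hy : ∀ u, HasDerivAt y (y' u) u) (hx' : Continuous x') (hy' : Continuous y')
    (hxab : x a = x b) (hyab : y a = y b) (c : ℝ) :
    (1 / 2) * ∫ u in a..b, (x u * y' u - y u * x' u) = ∫ u in a..b, (x u - c) * y' u := by
  have hxc : Continuous x := continuous_iff_continuousAt.2 fun u => (hx u).continuousAt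
  have hyc : Continuous y := continuous_iff_continuousAt.2 fun u => (hy u).continuousAt
  have by_parts := intervalIntegral.integral_mul_deriv_eq_deriv_mul (fun u _ => hy u)
    (fun u _ => hx u) (hy'.intervalIntegrable a b) (hx'.intervalIntegrable a b)
  have integral_y' := intervalIntegral.integral_eq_sub_of_hasDerivAt (fun u _ => hy u)
    (hy'.intervalIntegrable a b)
  simp only [mul_comm (y' _)] at by_parts
  simp only [sub_mul]
  rw [intervalIntegral.integral_sub, intervalIntegral.integral_sub,
    intervalIntegral.integral_const_mul, integral_y', by_parts, hxab, hyab]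
  · ring
  all_goals exact Continuous.intervalIntegrable (by fun_prop) _ _

end ClosedCurve

section WulffShape

variable {σ : ℝ → ℝ}

/-- The first coordinate of the boundary point of the Wulff shape of `σ` whose counterclockwise
tangent angle is `φ`, that is, whose outward normal is `(sin φ, -cos φ)`. -/
noncomputable def wulffX (σ : ℝ → ℝ) (φ : ℝ) : ℝ := σ φ * sin φ + deriv σ φ * cos φ

/-- The second coordinate of the boundary point of the Wulff shape of `σ` whose counterclockwise
tangent angle is `φ`; see `wulffX`. -/
noncomputable def wulffY (σ : ℝ → ℝ) (φ : ℝ) : ℝ := deriv σ φ * sin φ - σ φ * cos φ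

lemma wulffX_const_mul (r : ℝ) (σ : ℝ → ℝ) (φ : ℝ) :
    wulffX (fun ν => r * σ ν) φ = r * wulffX σ φ := by
  simp only [wulffX, deriv_const_mul_field']
  ring

lemma hasDerivAt_wulffX (hσ : ContDiff ℝ 2 σ) (φ : ℝ) :
    HasDerivAt (wulffX σ) ((σ φ + deriv (deriv σ) φ) * cos φ) φ := by
  have hσ' := (hσ.differentiable two_ne_zero φ).hasDerivAt
  have hσ'' := (hσ.differentiable_deriv_two φ).hasDerivAt
  exact ((hσ'.mul (hasDerivAt_sin φ)).add (hσ''.mul (hasDerivAt_cos φ))).congr_deriv (by ring)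

lemma hasDerivAt_wulffY (hσ : ContDiff ℝ 2 σ) (φ : ℝ) :
    HasDerivAt (wulffY σ) ((σ φ + deriv (deriv σ) φ) * sin φ) φ := by
  have hσ' := (hσ.differentiable two_ne_zero φ).hasDerivAt
  have hσ'' := (hσ.differentiable_deriv_two φ).hasDerivAt
  exact ((hσ''.mul (hasDerivAt_sin φ)).sub (hσ'.mul (hasDerivAt_cos φ))).congr_deriv (by ring)

lemma continuous_wulffX (hσ : ContDiff ℝ 2 σ) : Continuous (wulffX σ) :=
  continuous_iff_continuousAt.2 fun φ => (hasDerivAt_wulffX hσ φ).continuousAt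

lemma continuous_wulffY (hσ : ContDiff ℝ 2 σ) : Continuous (wulffY σ) :=
  continuous_iff_continuousAt.2 fun φ => (hasDerivAt_wulffY hσ φ).continuousAt

lemma continuous_add_deriv_deriv (hσ : ContDiff ℝ 2 σ) :
    Continuous fun φ => σ φ + deriv (deriv σ) φ :=
  hσ.continuous.add (ContDiff.deriv' (n := 1) hσ).continuous_deriv_one

lemma periodic_deriv {f : ℝ → ℝ} {T : ℝ} (hf : Function.Periodic f T) :
    Function.Periodic (deriv f) T := fun t => by
  rw [← deriv_comp_add_const, funext hf]

lemma periodic_wulffX (hper : Function.Periodic σ (2 * π)) :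
    Function.Periodic (wulffX σ) (2 * π) := fun φ => by
  simp only [wulffX, hper φ, periodic_deriv hper φ, sin_add_two_pi, cos_add_two_pi]

lemma periodic_wulffY (hper : Function.Periodic σ (2 * π)) :
    Function.Periodic (wulffY σ) (2 * π) := fun φ => by
  simp only [wulffY, hper φ, periodic_deriv hper φ, sin_add_two_pi, cos_add_two_pi]

lemma wulffX_mul_sin_sub_wulffY_mul_cos_self (σ : ℝ → ℝ) (ν : ℝ) :
    wulffX σ ν * sin ν - wulffY σ ν * cos ν = σ ν := by
  simp only [wulffX, wulffY]
  linear_combination σ ν * sin_sq_add_cos_sq ν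

-- In `φ` the left-hand side has derivative `(σ φ + σ'' φ) * sin (ν - φ)`, so it is largest at `ν`.
lemma wulffX_mul_sin_sub_wulffY_mul_cos_le (hσ : ContDiff ℝ 2 σ)
    (hper : Function.Periodic σ (2 * π)) (hconv : ∀ φ, 0 ≤ σ φ + deriv (deriv σ) φ) (φ ν : ℝ) :
    wulffX σ φ * sin ν - wulffY σ φ * cos ν ≤ σ ν := by
  set H : ℝ → ℝ := fun s => wulffX σ s * sin ν - wulffY σ s * cos ν with hH
  have hasDerivAt_H (s : ℝ) : HasDerivAt H ((σ s + deriv (deriv σ) s) * sin (ν - s)) s :=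
    (((hasDerivAt_wulffX hσ s).mul_const _).sub ((hasDerivAt_wulffY hσ s).mul_const _)).congr_deriv
      (by rw [sin_sub]; ring)
  have continuous_H : Continuous H :=
    continuous_iff_continuousAt.2 fun s => (hasDerivAt_H s).continuousAt
  have periodic_H : Function.Periodic H (2 * π) := fun s => by
    simp only [hH, periodic_wulffX hper s, periodic_wulffY hper s]
  have monotoneOn_H : MonotoneOn H (Set.Icc (ν - π) ν) := by
    refine monotoneOn_of_hasDerivWithinAt_nonneg (convex_Icc _ _) continuous_H.continuousOn
      (fun s _ => (hasDerivAt_H s).hasDerivWithinAt) fun s hs => ?_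
    rw [interior_Icc] at hs
    exact mul_nonneg (hconv s)
      (sin_nonneg_of_nonneg_of_le_pi (by linarith [hs.2]) (by linarith [hs.1]))
  have antitoneOn_H : AntitoneOn H (Set.Icc ν (ν + π)) := by
    refine antitoneOn_of_hasDerivWithinAt_nonpos (convex_Icc _ _) continuous_H.continuousOn
      (fun s _ => (hasDerivAt_H s).hasDerivWithinAt) fun s hs => ?_
    rw [interior_Icc] at hs
    exact mul_nonpos_of_nonneg_of_nonpos (hconv s)
      (sin_nonpos_of_nonpos_of_neg_pi_le (by linarith [hs.1]) (by linarith [hs.2]))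
  obtain ⟨s, hs, hφs⟩ := periodic_H.exists_mem_Ico two_pi_pos φ (ν - π)
  have hle : H s ≤ H ν := by
    rcases le_total s ν with h | h
    · exact monotoneOn_H ⟨hs.1, h⟩ ⟨by linarith [pi_pos], le_rfl⟩ h
    · exact antitoneOn_H ⟨le_rfl, by linarith [pi_pos]⟩ ⟨h, by linarith [hs.2]⟩ h
  calc H φ = H s := hφs
    _ ≤ H ν := hle
    _ = σ ν := wulffX_mul_sin_sub_wulffY_mul_cos_self σ ν

-- Subtracting `⟪w 0, n ν⟫` from `σ ν` moves the origin into the Wulff shape; as the boundary closes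
-- up, this does not change the area.
lemma wulffArea_nonneg (hσ : ContDiff ℝ 2 σ) (hper : Function.Periodic σ (2 * π))
    (hconv : ∀ φ, 0 ≤ σ φ + deriv (deriv σ) φ) : 0 ≤ wulffArea σ := by
  set κ : ℝ → ℝ := fun φ => σ φ + deriv (deriv σ) φ
  have hκ : Continuous κ := continuous_add_deriv_deriv hσ
  have hσc := hσ.continuous
  have integral_cos : ∫ φ in (0 : ℝ)..(2 * π), κ φ * cos φ = 0 := by
    rw [intervalIntegral.integral_eq_sub_of_hasDerivAt (fun φ _ => hasDerivAt_wulffX hσ φ)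
      ((hκ.mul continuous_cos).intervalIntegrable _ _), (periodic_wulffX hper).eq, sub_self]
  have integral_sin : ∫ φ in (0 : ℝ)..(2 * π), κ φ * sin φ = 0 := by
    rw [intervalIntegral.integral_eq_sub_of_hasDerivAt (fun φ _ => hasDerivAt_wulffY hσ φ)
      ((hκ.mul continuous_sin).intervalIntegrable _ _), (periodic_wulffY hper).eq, sub_self]
  have translate : ∫ ν in (0 : ℝ)..(2 * π), σ ν * κ ν = ∫ ν in (0 : ℝ)..(2 * π),
      (σ ν * κ ν - (wulffX σ 0 * (κ ν * sin ν) - wulffY σ 0 * (κ ν * cos ν))) := by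
    rw [intervalIntegral.integral_sub, intervalIntegral.integral_sub,
      intervalIntegral.integral_const_mul, intervalIntegral.integral_const_mul, integral_cos,
      integral_sin]
    · ring
    all_goals exact Continuous.intervalIntegrable (by fun_prop) _ _
  refine mul_nonneg (by norm_num) ?_
  rw [translate]
  refine intervalIntegral.integral_nonneg two_pi_pos.le fun ν _ => ?_
  have support := wulffX_mul_sin_sub_wulffY_mul_cos_le hσ hper hconv 0 ν
  linarith [mul_nonneg (sub_nonneg.2 support) (hconv ν)]

lemma wulffArea_const_mul (r : ℝ) (σ : ℝ → ℝ) :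
    wulffArea (fun ν => r * σ ν) = r ^ 2 * wulffArea σ := by
  simp only [wulffArea, deriv_const_mul_field']
  rw [mul_left_comm, ← intervalIntegral.integral_const_mul (r ^ 2)]
  congr 2
  ext ν
  ring

lemma wulffArea_eq_neg_integral (hσ : ContDiff ℝ 2 σ) (hper : Function.Periodic σ (2 * π)) (c : ℝ) :
    wulffArea σ =
      -∫ φ in c..(c + 2 * π), wulffY σ φ * ((σ φ + deriv (deriv σ) φ) * cos φ) := by
  have hκ := continuous_add_deriv_deriv hσ
  have periodic_integrand :
      Function.Periodic (fun ν => σ ν * (σ ν + deriv (deriv σ) ν)) (2 * π) := fun ν => by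
    simp only [hper ν, periodic_deriv (periodic_deriv hper) ν]
  have cross (φ : ℝ) : σ φ * (σ φ + deriv (deriv σ) φ) =
      -(wulffY σ φ * ((σ φ + deriv (deriv σ) φ) * cos φ) -
        wulffX σ φ * ((σ φ + deriv (deriv σ) φ) * sin φ)) := by
    linear_combination (-(σ φ + deriv (deriv σ) φ)) * wulffX_mul_sin_sub_wulffY_mul_cos_self σ φ
  have area := half_integral_cross_eq_integral_sub_mul_deriv (hasDerivAt_wulffY hσ)
    (hasDerivAt_wulffX hσ) (hκ.mul continuous_sin) (hκ.mul continuous_cos)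
    (periodic_wulffY hper c).symm (periodic_wulffX hper c).symm 0
  simp only [sub_zero] at area
  have shift := periodic_integrand.intervalIntegral_add_eq 0 c
  rw [zero_add] at shift
  rw [wulffArea, shift, ← area]
  simp only [cross, intervalIntegral.integral_neg, mul_neg]

end WulffShape

section Branches

universe u v

/-- The graph of `B` over `S` lies in the Wulff shape of `σ`, expressed by the support inequality
for every normal `(sin ν, -cos ν)`. -/
def GraphInWulffShape (σ B : ℝ → ℝ) (S : Set ℝ) : Prop :=
  ∀ t ∈ S, ∀ ν, t * sin ν - B t * cos ν ≤ σ ν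

lemma exists_continuous_comp_eqOn {X : Type*} {Y : Type u} {Z : Type v} [TopologicalSpace X]
    [TopologicalSpace Y] [T4Space Y] [TopologicalSpace Z] [TietzeExtension.{u, v} Z] {K : Set X}
    (hK : IsCompact K) {f : X → Y} (hf : ContinuousOn f K) (hinj : Set.InjOn f K) {h : X → Z}
    (hh : ContinuousOn h K) : ∃ B : Y → Z, Continuous B ∧ Set.EqOn (B ∘ f) h K := by
  have := isCompact_iff_compactSpace.1 hK
  obtain ⟨B, hB⟩ := ContinuousMap.exists_extension'
    (hf.domRestrict.isClosedEmbedding hinj.injective) ⟨K.domRestrict h, hh.domRestrict⟩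
  exact ⟨B, B.continuous, fun s hs => congrFun hB ⟨s, hs⟩⟩

variable {σ : ℝ → ℝ}

lemma exists_graphInWulffShape (hσ : ContDiff ℝ 2 σ) (hper : Function.Periodic σ (2 * π))
    (hconv : ∀ φ, 0 ≤ σ φ + deriv (deriv σ) φ) {a b : ℝ}
    (hinj : Set.InjOn (wulffX σ) (Set.uIcc a b)) :
    ∃ B : ℝ → ℝ, Continuous B ∧ GraphInWulffShape σ B (Set.uIcc (wulffX σ a) (wulffX σ b)) ∧
      ∫ t in (wulffX σ a)..(wulffX σ b), B t =
        ∫ φ in a..b, wulffY σ φ * ((σ φ + deriv (deriv σ) φ) * cos φ) := by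
  have hX := continuous_wulffX hσ
  obtain ⟨B, hBc, hB⟩ := exists_continuous_comp_eqOn isCompact_uIcc hX.continuousOn hinj
    (continuous_wulffY hσ).continuousOn
  refine ⟨B, hBc, fun t ht ν => ?_, ?_⟩
  · obtain ⟨φ, hφ, rfl⟩ := intermediate_value_uIcc hX.continuousOn ht
    rw [← Function.comp_apply (f := B), hB hφ]
    exact wulffX_mul_sin_sub_wulffY_mul_cos_le hσ hper hconv φ ν
  · rw [← intervalIntegral.integral_comp_mul_deriv (fun φ _ => hasDerivAt_wulffX hσ φ)
      ((continuous_add_deriv_deriv hσ).mul continuous_cos).continuousOn hBc]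
    exact intervalIntegral.integral_congr fun φ hφ => by simp only [hB hφ]

lemma strictMonoOn_wulffX (hσ : ContDiff ℝ 2 σ) (hconv : ∀ φ, 0 < σ φ + deriv (deriv σ) φ) :
    StrictMonoOn (wulffX σ) (Set.Icc (-(π / 2)) (π / 2)) := by
  refine strictMonoOn_of_hasDerivWithinAt_pos (convex_Icc _ _) (continuous_wulffX hσ).continuousOn
    (fun φ _ => (hasDerivAt_wulffX hσ φ).hasDerivWithinAt) fun φ hφ => ?_
  rw [interior_Icc] at hφ
  exact mul_pos (hconv φ) (cos_pos_of_mem_Ioo hφ)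

lemma strictAntiOn_wulffX (hσ : ContDiff ℝ 2 σ) (hconv : ∀ φ, 0 < σ φ + deriv (deriv σ) φ) :
    StrictAntiOn (wulffX σ) (Set.Icc (π / 2) (π / 2 + π)) := by
  refine strictAntiOn_of_hasDerivWithinAt_neg (convex_Icc _ _) (continuous_wulffX hσ).continuousOn
    (fun φ _ => (hasDerivAt_wulffX hσ φ).hasDerivWithinAt) fun φ hφ => ?_
  rw [interior_Icc] at hφ
  exact mul_neg_of_pos_of_neg (hconv φ)
    (cos_neg_of_pi_div_two_lt_of_lt hφ.1 (by linarith [hφ.2]))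

lemma wulffX_neg_pi_div_two_lt (hσ : ContDiff ℝ 2 σ)
    (hconv : ∀ φ, 0 < σ φ + deriv (deriv σ) φ) :
    wulffX σ (-(π / 2)) < wulffX σ (π / 2) :=
  have h : -(π / 2) < π / 2 := by linarith [pi_pos]
  strictMonoOn_wulffX hσ hconv (Set.left_mem_Icc.2 h.le) (Set.right_mem_Icc.2 h.le) h

lemma exists_wulffShape_lower_upper (hσ : ContDiff ℝ 2 σ) (hper : Function.Periodic σ (2 * π))
    (hconv : ∀ φ, 0 < σ φ + deriv (deriv σ) φ) :
    ∃ B₁ B₂ : ℝ → ℝ, Continuous B₁ ∧ Continuous B₂ ∧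
      GraphInWulffShape σ B₁ (Set.Icc (wulffX σ (-(π / 2))) (wulffX σ (π / 2))) ∧
      GraphInWulffShape σ B₂ (Set.Icc (wulffX σ (-(π / 2))) (wulffX σ (π / 2))) ∧
      ∫ t in (wulffX σ (-(π / 2)))..(wulffX σ (π / 2)), (B₂ t - B₁ t) = wulffArea σ := by
  have hlt := wulffX_neg_pi_div_two_lt hσ hconv
  have hconv' := fun φ => (hconv φ).le
  have hmono := strictMonoOn_wulffX hσ hconv
  have hanti := strictAntiOn_wulffX hσ hconv
  have hperiod : -(π / 2) + 2 * π = π / 2 + π := by ring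
  have hend : wulffX σ (π / 2 + π) = wulffX σ (-(π / 2)) :=
    hperiod ▸ periodic_wulffX hper (-(π / 2))
  rw [← Set.uIcc_of_le (by linarith [pi_pos])] at hmono hanti
  obtain ⟨B₁, hB₁c, hB₁, integral_B₁⟩ := exists_graphInWulffShape hσ hper hconv' hmono.injOn
  obtain ⟨B₂, hB₂c, hB₂, integral_B₂⟩ := exists_graphInWulffShape hσ hper hconv' hanti.injOn
  rw [hend] at hB₂ integral_B₂
  rw [Set.uIcc_of_ge hlt.le] at hB₂
  rw [Set.uIcc_of_le hlt.le] at hB₁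
  refine ⟨B₁, B₂, hB₁c, hB₂c, hB₁, hB₂, ?_⟩
  have hcont : Continuous fun φ => wulffY σ φ * ((σ φ + deriv (deriv σ) φ) * cos φ) :=
    (continuous_wulffY hσ).mul ((continuous_add_deriv_deriv hσ).mul continuous_cos)
  have split := intervalIntegral.integral_add_adjacent_intervals (μ := MeasureTheory.volume)
    (hcont.intervalIntegrable (-(π / 2)) (π / 2)) (hcont.intervalIntegrable (π / 2) (π / 2 + π))
  rw [intervalIntegral.integral_sub (hB₂c.intervalIntegrable _ _) (hB₁c.intervalIntegrable _ _),
    intervalIntegral.integral_symm (wulffX σ (π / 2)), integral_B₂, integral_B₁,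
    wulffArea_eq_neg_integral hσ hper (-(π / 2)), hperiod]
  linarith

end Branches

section Comparison

variable {σ B B₁ B₂ x g ν : ℝ → ℝ} {S : Set ℝ} {a b c d : ℝ}

lemma GraphInWulffShape.integral_le (hB : GraphInWulffShape σ B S) (hBc : Continuous B)
    (hσ : Continuous σ) (hx : ∀ u, HasDerivAt x (g u * cos (ν u)) u) (hg : ∀ u, 0 ≤ g u)
    (hgc : Continuous g) (hν : Continuous ν) (hab : a ≤ b) (hxS : ∀ u ∈ Set.Icc a b, x u ∈ S) :
    (∫ u in a..b, x u * (g u * sin (ν u))) - ∫ t in (x a)..(x b), B t ≤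
      ∫ u in a..b, σ (ν u) * g u := by
  have hxc : Continuous x := continuous_iff_continuousAt.2 fun u => (hx u).continuousAt
  rw [← intervalIntegral.integral_comp_mul_deriv (fun u _ => hx u) (by fun_prop) hBc,
    ← intervalIntegral.integral_sub (Continuous.intervalIntegrable (by fun_prop) _ _)
      (Continuous.intervalIntegrable (by fun_prop) _ _)]
  refine intervalIntegral.integral_mono_on hab (Continuous.intervalIntegrable (by fun_prop) _ _)
    (Continuous.intervalIntegrable (by fun_prop) _ _) fun u hu => ?_
  calc x u * (g u * sin (ν u)) - (B ∘ x) u * (g u * cos (ν u))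
      = (x u * sin (ν u) - B (x u) * cos (ν u)) * g u := by rw [Function.comp_apply]; ring
    _ ≤ σ (ν u) * g u := mul_le_mul_of_nonneg_right (hB _ (hxS u hu) _) (hg u)

lemma integral_add_integral_sub_le_of_switch (hB₁ : GraphInWulffShape σ B₁ S)
    (hB₂ : GraphInWulffShape σ B₂ S) (hB₁c : Continuous B₁) (hB₂c : Continuous B₂)
    (hσ : Continuous σ) (hx : ∀ u, HasDerivAt x (g u * cos (ν u)) u) (hg : ∀ u, 0 ≤ g u)
    (hgc : Continuous g) (hν : Continuous ν) (hac : a ≤ c) (hcd : c ≤ d) (hdb : d ≤ b)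
    (hxab : x a = x b) (hxS : ∀ u ∈ Set.Icc a b, x u ∈ S) :
    (∫ u in a..b, x u * (g u * sin (ν u))) + ∫ t in (x c)..(x d), (B₂ t - B₁ t) ≤
      ∫ u in a..b, σ (ν u) * g u := by
  have hxc : Continuous x := continuous_iff_continuousAt.2 fun u => (hx u).continuousAt
  have le_ac := hB₂.integral_le hB₂c hσ hx hg hgc hν hac fun u hu =>
    hxS u ⟨hu.1, hu.2.trans (hcd.trans hdb)⟩
  have le_cd := hB₁.integral_le hB₁c hσ hx hg hgc hν hcd fun u hu =>
    hxS u ⟨hac.trans hu.1, hu.2.trans hdb⟩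
  have le_db := hB₂.integral_le hB₂c hσ hx hg hgc hν hdb fun u hu =>
    hxS u ⟨(hac.trans hcd).trans hu.1, hu.2⟩
  have split {f : ℝ → ℝ} (hf : Continuous f) : ∫ u in a..b, f u =
      (∫ u in a..c, f u) + (∫ u in c..d, f u) + ∫ u in d..b, f u := by
    rw [intervalIntegral.integral_add_adjacent_intervals,
      intervalIntegral.integral_add_adjacent_intervals]
    all_goals exact hf.intervalIntegrable _ _
  have integral_B₂ : (∫ t in (x a)..(x c), B₂ t) + ∫ t in (x d)..(x b), B₂ t =
      -∫ t in (x c)..(x d), B₂ t := by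
    rw [← hxab, ← intervalIntegral.integral_symm, add_comm,
      intervalIntegral.integral_add_adjacent_intervals]
    all_goals exact hB₂c.intervalIntegrable _ _
  rw [split (by fun_prop), split (by fun_prop),
    intervalIntegral.integral_sub (hB₂c.intervalIntegrable _ _) (hB₁c.intervalIntegrable _ _)]
  linarith

lemma integral_add_wulffArea_le (hσ : ContDiff ℝ 2 σ) (hper : Function.Periodic σ (2 * π))
    (hconv : ∀ φ, 0 < σ φ + deriv (deriv σ) φ)
    (hx : ∀ u, HasDerivAt x (g u * cos (ν u)) u) (hg : ∀ u, 0 ≤ g u)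
    (hgc : Continuous g) (hν : Continuous ν) (hxab : x a = x b)
    (hc : c ∈ Set.Icc a b) (hd : d ∈ Set.Icc a b)
    (hxc : x c = wulffX σ (-(π / 2))) (hxd : x d = wulffX σ (π / 2))
    (hmin : IsMinOn x (Set.Icc a b) c) (hmax : IsMaxOn x (Set.Icc a b) d) :
    (∫ u in a..b, x u * (g u * sin (ν u))) + wulffArea σ ≤ ∫ u in a..b, σ (ν u) * g u := by
  obtain ⟨B₁, B₂, hB₁c, hB₂c, hB₁, hB₂, integral_B⟩ := exists_wulffShape_lower_upper hσ hper hconv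
  have hxS : ∀ u ∈ Set.Icc a b, x u ∈ Set.Icc (wulffX σ (-(π / 2))) (wulffX σ (π / 2)) :=
    fun u hu => ⟨hxc ▸ hmin hu, hxd ▸ hmax hu⟩
  rw [← integral_B, ← hxc, ← hxd]
  rcases le_total c d with hcd | hdc
  · exact integral_add_integral_sub_le_of_switch hB₁ hB₂ hB₁c hB₂c hσ.continuous hx hg hgc hν
      hc.1 hcd hd.2 hxab hxS
  · have h := integral_add_integral_sub_le_of_switch hB₂ hB₁ hB₂c hB₁c hσ.continuous hx hg hgc hν
      hd.1 hdc hc.2 hxab hxS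
    rwa [intervalIntegral.integral_symm (x c), ← intervalIntegral.integral_neg,
      funext fun t => neg_sub (B₁ t) (B₂ t)] at h

end Comparison

section Scaling

variable {σ x y g ν : ℝ → ℝ} {a b : ℝ}

lemma exists_area_add_wulffArea_mul_sq_le (hσ : ContDiff ℝ 2 σ)
    (hper : Function.Periodic σ (2 * π)) (hconv : ∀ φ, 0 < σ φ + deriv (deriv σ) φ)
    (hx : ∀ u, HasDerivAt x (g u * cos (ν u)) u) (hy : ∀ u, HasDerivAt y (g u * sin (ν u)) u)
    (hg : ∀ u, 0 ≤ g u) (hgc : Continuous g) (hν : Continuous ν) (hab : a ≤ b)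
    (hxab : x a = x b) (hyab : y a = y b) :
    ∃ r : ℝ, (1 / 2) * (∫ u in a..b, (x u * (g u * sin (ν u)) - y u * (g u * cos (ν u)))) +
      wulffArea σ * r ^ 2 ≤ (∫ u in a..b, σ (ν u) * g u) * r := by
  have hxc : Continuous x := continuous_iff_continuousAt.2 fun u => (hx u).continuousAt
  have area := half_integral_cross_eq_integral_sub_mul_deriv hx hy (by fun_prop) (by fun_prop)
    hxab hyab
  obtain ⟨c, hc, hmin⟩ := isCompact_Icc.exists_isMinOn (Set.nonempty_Icc.2 hab) hxc.continuousOn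
  obtain ⟨d, hd, hmax⟩ := isCompact_Icc.exists_isMaxOn (Set.nonempty_Icc.2 hab) hxc.continuousOn
  rcases (isMinOn_iff.1 hmin d hd).eq_or_lt with hcd | hcd
  · have integrand_eq_zero : ∀ u ∈ Set.uIcc a b, (x u - x c) * (g u * sin (ν u)) = 0 := by
      intro u hu
      rw [Set.uIcc_of_le hab] at hu
      rw [le_antisymm ((hmax hu).trans hcd.ge) (hmin hu), sub_self, zero_mul]
    refine ⟨0, ?_⟩
    rw [area (x c), intervalIntegral.integral_congr integrand_eq_zero]
    simp
  · set α := wulffX σ (-(π / 2)) with hα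
    set β := wulffX σ (π / 2)
    have hαβ : 0 < β - α := sub_pos.2 (wulffX_neg_pi_div_two_lt hσ hconv)
    set r := (x d - x c) / (β - α)
    have hr0 : 0 < r := div_pos (sub_pos.2 hcd) hαβ
    have hxd : x d - (x c - r * α) = r * β := by
      linear_combination -(div_mul_cancel₀ (x d - x c) hαβ.ne')
    have h := integral_add_wulffArea_le (σ := fun ν => r * σ ν) (x := fun u => x u - (x c - r * α))
      (contDiff_const.mul hσ) (fun φ => congrArg (r * ·) (hper φ))
      (fun φ => by
        simp only [deriv_const_mul_field', ← mul_add]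
        exact mul_pos hr0 (hconv φ))
      (fun u => (hx u).sub_const _) hg hgc hν (by rw [hxab]) hc hd
      (by rw [wulffX_const_mul, ← hα]; ring) (by rw [wulffX_const_mul, hxd])
      (hmin.comp_mono fun _ _ h => sub_le_sub_right h _)
      (hmax.comp_mono fun _ _ h => sub_le_sub_right h _)
    refine ⟨r, ?_⟩
    rw [← area, wulffArea_const_mul] at h
    simp only [mul_assoc r, intervalIntegral.integral_const_mul] at h
    linarith

end Scaling

lemma four_mul_le_sq_of_add_mul_sq_le {A W L r : ℝ} (hW : 0 ≤ W) (h : A + W * r ^ 2 ≤ L * r) :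
    4 * W * A ≤ L ^ 2 := by
  nlinarith [mul_le_mul_of_nonneg_left h hW, sq_nonneg (L - 2 * W * r)]

lemma continuous_speed {x : ℝ → ℝ × ℝ} {g ν : ℝ → ℝ} (hx : ContDiff ℝ 1 x)
    (htang : ∀ u, HasDerivAt x (g u • ((cos (ν u), sin (ν u)) : ℝ × ℝ)) u) (hν : Continuous ν) :
    Continuous g := by
  have hg : g = fun u => (deriv x u).1 * cos (ν u) + (deriv x u).2 * sin (ν u) := by
    ext u
    simp only [(htang u).deriv, Prod.smul_mk, smul_eq_mul]
    linear_combination (-g u) * sin_sq_add_cos_sq (ν u)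
  have hx' := hx.continuous_deriv_one
  rw [hg]
  exact (hx'.fst.mul (continuous_cos.comp hν)).add (hx'.snd.mul (continuous_sin.comp hν))

theorem anisoperimetric_inequality_general {σ : ℝ → ℝ} (hσ : ContDiff ℝ 2 σ)
    (hσper : Function.Periodic σ (2 * π)) (hσconv : ∀ ν, 0 < σ ν + deriv (deriv σ) ν)
    {x : ℝ → ℝ × ℝ} {g ν : ℝ → ℝ} {a b : ℝ} (hx : ContDiff ℝ 1 x) (hg : ∀ u, 0 ≤ g u)
    (htang : ∀ u, HasDerivAt x (g u • ((cos (ν u), sin (ν u)) : ℝ × ℝ)) u) (hν : Continuous ν)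
    (hab : a ≤ b) (hxab : x a = x b) :
    4 * wulffArea σ * ((1 / 2) * ∫ u in a..b,
        ((x u).1 * (g u * sin (ν u)) - (x u).2 * (g u * cos (ν u)))) ≤
      (∫ u in a..b, σ (ν u) * g u) ^ 2 := by
  obtain ⟨r, hr⟩ := exists_area_add_wulffArea_mul_sq_le hσ hσper hσconv
    (fun u => (htang u).fst) (fun u => (htang u).snd) hg (continuous_speed hx htang hν) hν hab
    (congrArg Prod.fst hxab) (congrArg Prod.snd hxab)
  exact four_mul_le_sq_of_add_mul_sq_le (wulffArea_nonneg hσ hσper fun φ => (hσconv φ).le) hr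

/-- Anisoperimetric inequality: `L_σ(Γ)² ≥ 4|W_σ|·A(Γ)` for any closed curve `Γ`. -/
theorem anisoperimetric_inequality
    (σ : ℝ → ℝ)
    (hσs : ContDiff ℝ (⊤ : ℕ∞) σ) (hσper : ∀ ν, σ (ν + 2 * π) = σ ν)
    (hσpos : ∀ ν, 0 < σ ν) (hσconv : ∀ ν, 0 < σ ν + deriv (deriv σ) ν)
    -- a closed curve `x` with speed `g` and tangent-angle lift `ν`
    (x : ℝ → ℝ × ℝ) (g ν : ℝ → ℝ)
    (hx : ContDiff ℝ 2 x)
    (hxper : ∀ u, x (u + 1) = x u)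
    (hg : ∀ u, 0 < g u)
    (htang : ∀ u, HasDerivAt x (g u • ((Real.cos (ν u), Real.sin (ν u)) : ℝ × ℝ)) u)
    (hνc : Continuous ν)
    (hνper : ∀ u, ν (u + 1) = ν u + 2 * π)
    (hinj : Set.InjOn x (Set.Ico 0 1))
    -- positive enclosed area
    (hA : 0 < (1 / 2) * ∫ u in (0:ℝ)..1,
        ((x u).1 * (g u * Real.sin (ν u)) - (x u).2 * (g u * Real.cos (ν u)))) :
    (∫ u in (0:ℝ)..1, σ (ν u) * g u) ^ 2 ≥
      4 * wulffArea σ *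
        ((1 / 2) * ∫ u in (0:ℝ)..1,
          ((x u).1 * (g u * Real.sin (ν u)) - (x u).2 * (g u * Real.cos (ν u)))) :=
  anisoperimetric_inequality_general (hσs.of_le (by norm_cast)) hσper hσconv
    (hx.of_le one_le_two) (fun u => (hg u).le) htang hνc zero_le_one (by simpa using (hxper 0).symm)
end

section
/- Mixed anisoperimetric inequality with μ ≡ 1: for any anisotropy function σ and any closed curve Γ, L_σ(Γ)·L(Γ) ≥ (2√(π·|W_σ|) + L(∂W_σ))·A(Γ), where L(Γ) = ∫₀¹ |x'(u)| du is the total length of Γ. -/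
open Real

/-- The Wulff perimeter `L(∂W_σ) = ∫₀^{2π} σ(ν) dν`. -/
noncomputable def wulffPerimeter (σ : ℝ → ℝ) : ℝ :=
  ∫ ν in (0:ℝ)..(2 * π), σ ν

/-!
Adding a constant `t > 0` to `σ` adds a disc of radius `t` to the Wulff shape, so that the Wulff
inequality `4 |W_σ| A ≤ L_σ ^ 2` becomes, by Steiner's formula,
`4 (|W_σ| + t L(∂W_σ) + π t ^ 2) A ≤ (L_σ + t L) ^ 2`. As `2 √(π |W_σ|) t ≤ |W_σ| + π t ^ 2`, the
number `K = (2 √(π |W_σ|) + L(∂W_σ)) A` satisfies `4 K t ≤ (L_σ + t L) ^ 2` for all `t > 0`, and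
optimizing over `t` yields `K ≤ L_σ L`.

The Wulff inequality itself follows from E. Schmidt's argument. Rescale the curve so that its
projection to the first axis is that of the Wulff shape, and cut both at their leftmost and
rightmost points. Match each point of the curve with the point of the corresponding Wulff arc that
has the same first coordinate: if `(p₁, p₂)` is the match of `(x₁, x₂)`, then `∫ p₂ dx₁` depends on
the Wulff arc only, while `x₁ dx₂ - p₂ dx₁ ≤ σ(ν) ds` since `σ` is the support function of the
Wulff shape. Integration gives `A + |W_σ| ≤ L_σ`.
-/

section Preliminaries

universe u v

variable {E : Type*} [NormedAddCommGroup E] [NormedSpace ℝ E]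

lemma integral_eq_zero_of_hasDerivAt_of_periodic [CompleteSpace E] {f f' : ℝ → E} {T : ℝ}
    (hf : ∀ u, HasDerivAt f (f' u) u) (hf' : Continuous f') (hper : Function.Periodic f T) :
    ∫ u in (0 : ℝ)..T, f' u = 0 := by
  rw [intervalIntegral.integral_eq_sub_of_hasDerivAt (fun u _ => hf u) (hf'.intervalIntegrable _ _),
    hper.eq, sub_self]

lemma integral_add_integral_of_periodic {f : ℝ → E} {T : ℝ} (hf : Continuous f)
    (hper : Function.Periodic f T) (a b : ℝ) :
    (∫ u in a..b, f u) + ∫ u in b..(a + T), f u = ∫ u in (0 : ℝ)..T, f u := by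
  rw [intervalIntegral.integral_add_adjacent_intervals (hf.intervalIntegrable _ _)
    (hf.intervalIntegrable _ _)]
  simpa only [zero_add] using hper.intervalIntegral_add_eq a 0

lemma periodic_of_hasDerivAt {f f' : ℝ → E} {T : ℝ} (hf : ∀ u, HasDerivAt f (f' u) u)
    (hper : Function.Periodic f T) : Function.Periodic f' T := fun u => by
  have hshift := (hf (u + T)).comp_add_const u T
  rw [funext hper] at hshift
  exact hshift.unique (hf u)

lemma exists_forall_le_and_le_of_periodic {α : Type*} [LinearOrder α] [TopologicalSpace α]
    [OrderClosedTopology α] {f : ℝ → α} {T : ℝ} (hT : 0 < T) (hf : Continuous f)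
    (hper : Function.Periodic f T) :
    ∃ a b, a ≤ b ∧ b ≤ a + T ∧ ∀ u, f a ≤ f u ∧ f u ≤ f b := by
  have hcompact := hper.compact_of_continuous hT.ne' hf
  obtain ⟨-, ⟨a, rfl⟩, ha⟩ := hcompact.exists_isLeast (Set.range_nonempty f)
  obtain ⟨-, ⟨c, rfl⟩, hc⟩ := hcompact.exists_isGreatest (Set.range_nonempty f)
  obtain ⟨b, hb, hcb⟩ := hper.exists_mem_Ico hT c a
  exact ⟨a, b, hb.1, hb.2.le, fun u => ⟨ha ⟨u, rfl⟩, hcb ▸ hc ⟨u, rfl⟩⟩⟩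

lemma exists_continuous_comp_eqOn_of_injOn {X : Type*} {Y : Type u} {Z : Type v}
    [TopologicalSpace X] [TopologicalSpace Y] [T4Space Y] [TopologicalSpace Z]
    [TietzeExtension.{u, v} Z] {K : Set X} (hK : IsCompact K) {f : X → Y} {g : X → Z}
    (hf : ContinuousOn f K) (hg : ContinuousOn g K) (hinj : Set.InjOn f K) :
    ∃ φ : Y → Z, Continuous φ ∧ Set.EqOn (φ ∘ f) g K := by
  have : CompactSpace K := isCompact_iff_compactSpace.1 hK
  have hemb : Topology.IsClosedEmbedding (K.domRestrict f) :=
    hf.domRestrict.isClosedEmbedding hinj.injective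
  obtain ⟨φ, hφ⟩ := ContinuousMap.exists_extension hemb ⟨K.domRestrict g, hg.domRestrict⟩
  exact ⟨φ, φ.continuous, fun t ht => DFunLike.congr_fun hφ ⟨t, ht⟩⟩

lemma le_mul_of_forall_four_mul_le_add_sq {K S L : ℝ} (hS : 0 ≤ S) (hL : 0 ≤ L)
    (h : ∀ t > 0, 4 * K * t ≤ (S + t * L) ^ 2) : K ≤ S * L := by
  by_contra! hK
  have hSL : 0 ≤ S * L := mul_nonneg hS hL
  rcases hL.eq_or_lt with rfl | hL
  · have hK0 : 0 < K := by linarith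
    have ht := h ((S ^ 2 + 1) / (4 * K)) (by positivity)
    rw [mul_div_cancel₀ _ (by positivity)] at ht
    linarith
  · -- the vertex of the parabola `t ↦ (S + t L) ^ 2 - 4 K t`
    have ht := h ((2 * K - S * L) / L ^ 2) (div_pos (by linarith) (by positivity))
    have hvertex : S + (2 * K - S * L) / L ^ 2 * L = 2 * K / L := by field_simp; ring
    rw [hvertex, ← mul_div_assoc, div_pow, div_le_div_iff_of_pos_right (by positivity)] at ht
    nlinarith

end Preliminaries

/-- A closed `C¹` curve `x` of period `T` with speed `g` and tangent angle `ν`. The rotation number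
is arbitrary, self-intersections are allowed and the speed may vanish. -/
structure IsClosedCurve (T : ℝ) (x : ℝ → ℝ × ℝ) (g ν : ℝ → ℝ) : Prop where
  continuous_speed : Continuous g
  continuous_angle : Continuous ν
  speed_nonneg : ∀ u, 0 ≤ g u
  hasDerivAt : ∀ u, HasDerivAt x (g u • (cos (ν u), sin (ν u))) u
  periodic : Function.Periodic x T

/-- The signed area `(1/2) ∮ det(x, dx)` enclosed by a curve with speed `g` and tangent angle
`ν`. -/
noncomputable def enclosedArea (T : ℝ) (x : ℝ → ℝ × ℝ) (g ν : ℝ → ℝ) : ℝ :=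
  (1 / 2) * ∫ u in (0 : ℝ)..T, ((x u).1 * (g u * sin (ν u)) - (x u).2 * (g u * cos (ν u)))

/-- The anisotropic length `L_σ` of a curve with speed `g` and tangent angle `ν`. -/
noncomputable def anisotropicLength (σ : ℝ → ℝ) (T : ℝ) (g ν : ℝ → ℝ) : ℝ :=
  ∫ u in (0 : ℝ)..T, σ (ν u) * g u

lemma continuous_speed_of_contDiff {x : ℝ → ℝ × ℝ} {g ν : ℝ → ℝ} (hx : ContDiff ℝ 1 x)
    (hν : Continuous ν) (htang : ∀ u, HasDerivAt x (g u • (cos (ν u), sin (ν u))) u) :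
    Continuous g := by
  have hg : g = fun u => (deriv x u).1 * cos (ν u) + (deriv x u).2 * sin (ν u) := by
    funext u
    simp only [(htang u).deriv, Prod.smul_mk, smul_eq_mul]
    linear_combination -g u * sin_sq_add_cos_sq (ν u)
  have hderiv : Continuous (deriv x) := hx.continuous_deriv le_rfl
  rw [hg]
  exact (hderiv.fst.mul (continuous_cos.comp hν)).add (hderiv.snd.mul (continuous_sin.comp hν))

namespace IsClosedCurve

variable {T : ℝ} {x : ℝ → ℝ × ℝ} {g ν : ℝ → ℝ}

lemma hasDerivAt_fst (hx : IsClosedCurve T x g ν) (u : ℝ) :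
    HasDerivAt (fun u => (x u).1) (g u * cos (ν u)) u :=
  (hx.hasDerivAt u).hasFDerivAt.fst.hasDerivAt.congr_deriv (by simp)

lemma hasDerivAt_snd (hx : IsClosedCurve T x g ν) (u : ℝ) :
    HasDerivAt (fun u => (x u).2) (g u * sin (ν u)) u :=
  (hx.hasDerivAt u).hasFDerivAt.snd.hasDerivAt.congr_deriv (by simp)

protected lemma continuous (hx : IsClosedCurve T x g ν) : Continuous x :=
  continuous_iff_continuousAt.2 fun u => (hx.hasDerivAt u).continuousAt

lemma periodic_fst (hx : IsClosedCurve T x g ν) : Function.Periodic (fun u => (x u).1) T :=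
  hx.periodic.comp Prod.fst

lemma periodic_snd (hx : IsClosedCurve T x g ν) : Function.Periodic (fun u => (x u).2) T :=
  hx.periodic.comp Prod.snd

lemma periodic_speed (hx : IsClosedCurve T x g ν) : Function.Periodic g T := fun u => by
  have hcos := periodic_of_hasDerivAt hx.hasDerivAt_fst hx.periodic_fst u
  have hsin := periodic_of_hasDerivAt hx.hasDerivAt_snd hx.periodic_snd u
  have hnorm : ∀ v, g v ^ 2 = (g v * cos (ν v)) ^ 2 + (g v * sin (ν v)) ^ 2 := fun v => by
    linear_combination -g v ^ 2 * sin_sq_add_cos_sq (ν v)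
  rw [← sq_eq_sq₀ (hx.speed_nonneg _) (hx.speed_nonneg _), hnorm, hnorm u, hcos, hsin]

-- The tangent angle is only periodic modulo `2 π`, and only where the speed does not vanish.
lemma periodic_anisotropicSpeed (hx : IsClosedCurve T x g ν) {σ : ℝ → ℝ}
    (hσ : Function.Periodic σ (2 * π)) : Function.Periodic (fun u => σ (ν u) * g u) T := fun u => by
  have hg := hx.periodic_speed u
  have hcos := periodic_of_hasDerivAt hx.hasDerivAt_fst hx.periodic_fst u
  have hsin := periodic_of_hasDerivAt hx.hasDerivAt_snd hx.periodic_snd u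
  simp only [hg] at hcos hsin ⊢
  rcases eq_or_ne (g u) 0 with h0 | h0
  · simp only [h0, mul_zero]
  · have hangle : (ν (u + T) : Angle) = ν u :=
      Angle.cos_sin_inj (mul_left_cancel₀ h0 hcos) (mul_left_cancel₀ h0 hsin)
    rw [← hσ.lift_coe, ← hσ.lift_coe (ν u)]
    exact congrArg (hσ.lift · * g u) hangle

lemma integral_speed_mul_cos (hx : IsClosedCurve T x g ν) :
    ∫ u in (0 : ℝ)..T, g u * cos (ν u) = 0 :=
  integral_eq_zero_of_hasDerivAt_of_periodic hx.hasDerivAt_fst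
    (hx.continuous_speed.mul (continuous_cos.comp hx.continuous_angle)) hx.periodic_fst

lemma integral_speed_mul_sin (hx : IsClosedCurve T x g ν) :
    ∫ u in (0 : ℝ)..T, g u * sin (ν u) = 0 :=
  integral_eq_zero_of_hasDerivAt_of_periodic hx.hasDerivAt_snd
    (hx.continuous_speed.mul (continuous_sin.comp hx.continuous_angle)) hx.periodic_snd

lemma integral_fst_mul_add_integral_snd_mul (hx : IsClosedCurve T x g ν) :
    (∫ u in (0 : ℝ)..T, (x u).1 * (g u * sin (ν u))) +
      ∫ u in (0 : ℝ)..T, (x u).2 * (g u * cos (ν u)) = 0 := by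
  have hxc := hx.continuous
  have hgc := hx.continuous_speed
  have hνc := hx.continuous_angle
  rw [← intervalIntegral.integral_add (Continuous.intervalIntegrable (by fun_prop) _ _)
    (Continuous.intervalIntegrable (by fun_prop) _ _)]
  refine integral_eq_zero_of_hasDerivAt_of_periodic (f := fun u => (x u).1 * (x u).2)
    (fun u => ?_) (by fun_prop) (hx.periodic_fst.mul hx.periodic_snd)
  exact ((hx.hasDerivAt_fst u).mul (hx.hasDerivAt_snd u)).congr_deriv (by ring)

lemma enclosedArea_eq_integral_fst (hx : IsClosedCurve T x g ν) :
    enclosedArea T x g ν = ∫ u in (0 : ℝ)..T, (x u).1 * (g u * sin (ν u)) := by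
  have hxc := hx.continuous
  have hgc := hx.continuous_speed
  have hνc := hx.continuous_angle
  rw [enclosedArea, intervalIntegral.integral_sub
    (Continuous.intervalIntegrable (by fun_prop) _ _)
    (Continuous.intervalIntegrable (by fun_prop) _ _)]
  linear_combination -(1 / 2) * hx.integral_fst_mul_add_integral_snd_mul

lemma enclosedArea_eq_neg_integral_snd (hx : IsClosedCurve T x g ν) :
    enclosedArea T x g ν = -∫ u in (0 : ℝ)..T, (x u).2 * (g u * cos (ν u)) := by
  rw [hx.enclosedArea_eq_integral_fst]
  linear_combination hx.integral_fst_mul_add_integral_snd_mul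

protected lemma smul_add_const (hx : IsClosedCurve T x g ν) {c : ℝ} (hc : 0 ≤ c) (v : ℝ × ℝ) :
    IsClosedCurve T (fun u => c • x u + v) (fun u => c * g u) ν where
  continuous_speed := hx.continuous_speed.const_mul c
  continuous_angle := hx.continuous_angle
  speed_nonneg u := mul_nonneg hc (hx.speed_nonneg u)
  hasDerivAt u :=
    (((hx.hasDerivAt u).const_smul c).add_const v).congr_deriv (mul_smul _ _ _).symm
  periodic u := by simp only [hx.periodic u]

lemma enclosedArea_smul_add_const (hx : IsClosedCurve T x g ν) {c : ℝ} (hc : 0 ≤ c) (v : ℝ × ℝ) :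
    enclosedArea T (fun u => c • x u + v) (fun u => c * g u) ν = c ^ 2 * enclosedArea T x g ν := by
  have hxc := hx.continuous
  have hgc := hx.continuous_speed
  have hνc := hx.continuous_angle
  have hsplit : ∀ u, (c • x u + v).1 * (c * g u * sin (ν u)) =
      c ^ 2 * ((x u).1 * (g u * sin (ν u))) + v.1 * c * (g u * sin (ν u)) := fun u => by
    simp only [Prod.fst_add, Prod.smul_fst, smul_eq_mul]
    ring
  rw [(hx.smul_add_const hc v).enclosedArea_eq_integral_fst, hx.enclosedArea_eq_integral_fst]
  simp only [hsplit]
  rw [intervalIntegral.integral_add (Continuous.intervalIntegrable (by fun_prop) _ _)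
    (Continuous.intervalIntegrable (by fun_prop) _ _), intervalIntegral.integral_const_mul,
    intervalIntegral.integral_const_mul, hx.integral_speed_mul_sin, mul_zero, add_zero]

end IsClosedCurve

lemma anisotropicLength_const_mul_speed (σ : ℝ → ℝ) (T c : ℝ) (g ν : ℝ → ℝ) :
    anisotropicLength σ T (fun u => c * g u) ν = c * anisotropicLength σ T g ν := by
  simp only [anisotropicLength, mul_left_comm _ c, intervalIntegral.integral_const_mul]

lemma anisotropicLength_add_const {σ g ν : ℝ → ℝ} (hσ : Continuous σ) (hg : Continuous g)
    (hν : Continuous ν) (T t : ℝ) :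
    anisotropicLength (fun θ => σ θ + t) T g ν =
      anisotropicLength σ T g ν + t * ∫ u in (0 : ℝ)..T, g u := by
  simp only [anisotropicLength, add_mul]
  rw [intervalIntegral.integral_add (Continuous.intervalIntegrable (by fun_prop) _ _)
    (Continuous.intervalIntegrable (by fun_prop) _ _), intervalIntegral.integral_const_mul]

/-- The radius of curvature `σ + σ''` of the boundary of the Wulff shape of `σ`. -/
noncomputable def curvatureRadius (σ : ℝ → ℝ) (θ : ℝ) : ℝ :=
  σ θ + deriv (deriv σ) θ

lemma curvatureRadius_add_const (σ : ℝ → ℝ) (t θ : ℝ) :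
    curvatureRadius (fun θ => σ θ + t) θ = curvatureRadius σ θ + t := by
  simp only [curvatureRadius, deriv_add_const']
  ring

/-- The boundary point of the Wulff shape of `σ` at which the tangent angle is `θ`. Since `σ` is a
function of the tangent angle, the outer normal is `(sin θ, -cos θ)`. -/
noncomputable def wulffCurve (σ : ℝ → ℝ) (θ : ℝ) : ℝ × ℝ :=
  (σ θ * sin θ + deriv σ θ * cos θ, -(σ θ * cos θ) + deriv σ θ * sin θ)

lemma enclosedArea_wulffCurve (σ : ℝ → ℝ) :
    enclosedArea (2 * π) (wulffCurve σ) (curvatureRadius σ) id = wulffArea σ := by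
  refine congrArg (1 / 2 * ·) (intervalIntegral.integral_congr fun θ _ => ?_)
  simp only [wulffCurve, curvatureRadius, id_eq]
  linear_combination σ θ * (σ θ + deriv (deriv σ) θ) * sin_sq_add_cos_sq θ

/-- `C²` support functions of plane convex bodies. They are the anisotropy functions of class `C²`,
except that they need not be positive and that the convexity is not required to be strict. -/
structure IsSupportFunction (σ : ℝ → ℝ) : Prop where
  contDiff : ContDiff ℝ 2 σ
  periodic : Function.Periodic σ (2 * π)
  curvatureRadius_nonneg : ∀ θ, 0 ≤ curvatureRadius σ θ

namespace IsSupportFunction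

variable {σ : ℝ → ℝ}

protected lemma continuous (hσ : IsSupportFunction σ) : Continuous σ :=
  hσ.contDiff.continuous

lemma contDiff_deriv (hσ : IsSupportFunction σ) : ContDiff ℝ 1 (deriv σ) :=
  hσ.contDiff.deriv'

lemma continuous_deriv_deriv (hσ : IsSupportFunction σ) : Continuous (deriv (deriv σ)) :=
  hσ.contDiff_deriv.continuous_deriv le_rfl

lemma continuous_curvatureRadius (hσ : IsSupportFunction σ) : Continuous (curvatureRadius σ) :=
  hσ.continuous.add hσ.continuous_deriv_deriv

lemma hasDerivAt (hσ : IsSupportFunction σ) (θ : ℝ) : HasDerivAt σ (deriv σ θ) θ :=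
  (hσ.contDiff.differentiable two_ne_zero θ).hasDerivAt

lemma hasDerivAt_deriv (hσ : IsSupportFunction σ) (θ : ℝ) :
    HasDerivAt (deriv σ) (deriv (deriv σ) θ) θ :=
  (hσ.contDiff_deriv.differentiable one_ne_zero θ).hasDerivAt

lemma periodic_deriv (hσ : IsSupportFunction σ) : Function.Periodic (deriv σ) (2 * π) :=
  periodic_of_hasDerivAt hσ.hasDerivAt hσ.periodic

lemma integral_deriv_deriv (hσ : IsSupportFunction σ) :
    ∫ θ in (0 : ℝ)..(2 * π), deriv (deriv σ) θ = 0 :=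
  integral_eq_zero_of_hasDerivAt_of_periodic hσ.hasDerivAt_deriv hσ.continuous_deriv_deriv
    hσ.periodic_deriv

protected lemma add_const (hσ : IsSupportFunction σ) {t : ℝ} (ht : 0 ≤ t) :
    IsSupportFunction (fun θ => σ θ + t) where
  contDiff := hσ.contDiff.add contDiff_const
  periodic θ := by simp only [hσ.periodic θ]
  curvatureRadius_nonneg θ := by
    rw [curvatureRadius_add_const]
    exact add_nonneg (hσ.curvatureRadius_nonneg θ) ht

lemma isClosedCurve_wulffCurve (hσ : IsSupportFunction σ) :
    IsClosedCurve (2 * π) (wulffCurve σ) (curvatureRadius σ) id where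
  continuous_speed := hσ.continuous_curvatureRadius
  continuous_angle := continuous_id
  speed_nonneg := hσ.curvatureRadius_nonneg
  hasDerivAt θ := by
    have hσ₀ := hσ.hasDerivAt θ
    have hσ₁ := hσ.hasDerivAt_deriv θ
    have hfst := (hσ₀.mul (hasDerivAt_sin θ)).add (hσ₁.mul (hasDerivAt_cos θ))
    have hsnd := (hσ₀.mul (hasDerivAt_cos θ)).neg.add (hσ₁.mul (hasDerivAt_sin θ))
    refine (hfst.prodMk hsnd).congr_deriv ?_
    simp only [curvatureRadius, id_eq, Prod.smul_mk, smul_eq_mul, Prod.mk.injEq]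
    constructor <;> ring
  periodic θ := by
    simp only [wulffCurve, hσ.periodic θ, hσ.periodic_deriv θ, sin_add_two_pi, cos_add_two_pi]

lemma hasDerivAt_wulffCurve_pairing (hσ : IsSupportFunction σ) (ν θ : ℝ) :
    HasDerivAt (fun θ => (wulffCurve σ θ).1 * sin ν - (wulffCurve σ θ).2 * cos ν)
      (curvatureRadius σ θ * sin (ν - θ)) θ := by
  have hp := hσ.isClosedCurve_wulffCurve
  refine (((hp.hasDerivAt_fst θ).mul_const (sin ν)).sub
    ((hp.hasDerivAt_snd θ).mul_const (cos ν))).congr_deriv ?_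
  rw [sin_sub, id_eq]
  ring

-- The left-hand side, as a function of `θ`, increases on `[ν - π, ν]` and decreases on
-- `[ν, ν + π]`, and its value at `θ = ν` is `σ ν`.
lemma wulffCurve_pairing_le (hσ : IsSupportFunction σ) (θ ν : ℝ) :
    (wulffCurve σ θ).1 * sin ν - (wulffCurve σ θ).2 * cos ν ≤ σ ν := by
  set q : ℝ → ℝ := fun θ => (wulffCurve σ θ).1 * sin ν - (wulffCurve σ θ).2 * cos ν with hq
  have hderiv : ∀ t, HasDerivAt q (curvatureRadius σ t * sin (ν - t)) t :=
    hσ.hasDerivAt_wulffCurve_pairing ν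
  have hcont : Continuous q := continuous_iff_continuousAt.2 fun t => (hderiv t).continuousAt
  have hper : Function.Periodic q (2 * π) := fun t => by
    simp only [hq, hσ.isClosedCurve_wulffCurve.periodic t]
  have hqν : q ν = σ ν := by
    simp only [hq, wulffCurve]
    linear_combination σ ν * sin_sq_add_cos_sq ν
  have hmono : MonotoneOn q (Set.Icc (ν - π) ν) := by
    refine monotoneOn_of_hasDerivWithinAt_nonneg (convex_Icc _ _) hcont.continuousOn
      (fun t _ => (hderiv t).hasDerivWithinAt) fun t ht => ?_
    rw [interior_Icc] at ht
    exact mul_nonneg (hσ.curvatureRadius_nonneg t)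
      (sin_nonneg_of_nonneg_of_le_pi (by linarith [ht.2]) (by linarith [ht.1]))
  have hanti : AntitoneOn q (Set.Icc ν (ν + π)) := by
    refine antitoneOn_of_hasDerivWithinAt_nonpos (convex_Icc _ _) hcont.continuousOn
      (fun t _ => (hderiv t).hasDerivWithinAt) fun t ht => ?_
    rw [interior_Icc] at ht
    exact mul_nonpos_of_nonneg_of_nonpos (hσ.curvatureRadius_nonneg t)
      (sin_nonpos_of_nonpos_of_neg_pi_le (by linarith [ht.1]) (by linarith [ht.2]))
  obtain ⟨t, ⟨ht₁, ht₂⟩, hqt⟩ := hper.exists_mem_Ico two_pi_pos θ (ν - π)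
  change q θ ≤ σ ν
  rw [hqt, ← hqν]
  rcases le_total t ν with htν | hνt
  · exact hmono ⟨ht₁, htν⟩ ⟨ht₁.trans htν, le_rfl⟩ htν
  · exact hanti ⟨le_rfl, by linarith [pi_pos]⟩ ⟨hνt, by linarith⟩ hνt

-- `σ` dominates the support function of any single point of the Wulff shape, whose anisotropic
-- length vanishes along closed curves.
lemma anisotropicLength_nonneg (hσ : IsSupportFunction σ) {T : ℝ} (hT : 0 ≤ T) {x : ℝ → ℝ × ℝ}
    {g ν : ℝ → ℝ} (hx : IsClosedCurve T x g ν) : 0 ≤ anisotropicLength σ T g ν := by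
  have hσc := hσ.continuous
  have hgc := hx.continuous_speed
  have hνc := hx.continuous_angle
  set p := wulffCurve σ 0
  calc 0 = ∫ u in (0 : ℝ)..T, (p.1 * (g u * sin (ν u)) - p.2 * (g u * cos (ν u))) := by
        rw [intervalIntegral.integral_sub (Continuous.intervalIntegrable (by fun_prop) _ _)
          (Continuous.intervalIntegrable (by fun_prop) _ _), intervalIntegral.integral_const_mul,
          intervalIntegral.integral_const_mul, hx.integral_speed_mul_sin,
          hx.integral_speed_mul_cos]
        ring
    _ ≤ anisotropicLength σ T g ν := by
        refine intervalIntegral.integral_mono hT (Continuous.intervalIntegrable (by fun_prop) _ _)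
          (Continuous.intervalIntegrable (by fun_prop) _ _) fun u => ?_
        linear_combination
          mul_le_mul_of_nonneg_right (hσ.wulffCurve_pairing_le 0 (ν u)) (hx.speed_nonneg u)

lemma wulffArea_nonneg (hσ : IsSupportFunction σ) : 0 ≤ wulffArea σ :=
  mul_nonneg one_half_pos.le
    (hσ.anisotropicLength_nonneg two_pi_pos.le hσ.isClosedCurve_wulffCurve)

lemma wulffPerimeter_nonneg (hσ : IsSupportFunction σ) : 0 ≤ wulffPerimeter σ := by
  have hcurv : ∫ θ in (0 : ℝ)..(2 * π), curvatureRadius σ θ = wulffPerimeter σ := by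
    simp only [curvatureRadius]
    rw [intervalIntegral.integral_add (hσ.continuous.intervalIntegrable _ _)
      (hσ.continuous_deriv_deriv.intervalIntegrable _ _), hσ.integral_deriv_deriv, add_zero,
      wulffPerimeter]
  rw [← hcurv]
  exact intervalIntegral.integral_nonneg two_pi_pos.le fun θ _ => hσ.curvatureRadius_nonneg θ

lemma wulffArea_add_const (hσ : IsSupportFunction σ) (t : ℝ) :
    wulffArea (fun θ => σ θ + t) = wulffArea σ + t * wulffPerimeter σ + π * t ^ 2 := by
  have hσc := hσ.continuous
  have hσc₂ := hσ.continuous_deriv_deriv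
  have hexpand : ∀ θ, (σ θ + t) * (σ θ + t + deriv (deriv σ) θ) =
      σ θ * (σ θ + deriv (deriv σ) θ) + 2 * t * σ θ + t * deriv (deriv σ) θ + t ^ 2 :=
    fun θ => by ring
  simp only [wulffArea, wulffPerimeter, deriv_add_const', hexpand]
  rw [intervalIntegral.integral_add (Continuous.intervalIntegrable (by fun_prop) _ _)
    (Continuous.intervalIntegrable (by fun_prop) _ _),
    intervalIntegral.integral_add (Continuous.intervalIntegrable (by fun_prop) _ _)
    (Continuous.intervalIntegrable (by fun_prop) _ _),
    intervalIntegral.integral_add (Continuous.intervalIntegrable (by fun_prop) _ _)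
    (Continuous.intervalIntegrable (by fun_prop) _ _),
    intervalIntegral.integral_const_mul, intervalIntegral.integral_const_mul,
    hσ.integral_deriv_deriv, intervalIntegral.integral_const, smul_eq_mul]
  ring

lemma strictMonoOn_wulffCurve_fst (hσ : IsSupportFunction σ) (hpos : ∀ θ, 0 < curvatureRadius σ θ) :
    StrictMonoOn (fun θ => (wulffCurve σ θ).1) (Set.Icc (-(π / 2)) (π / 2)) := by
  have hp := hσ.isClosedCurve_wulffCurve
  refine strictMonoOn_of_hasDerivWithinAt_pos (convex_Icc _ _) hp.continuous.fst.continuousOn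
    (fun θ _ => (hp.hasDerivAt_fst θ).hasDerivWithinAt) fun θ hθ => ?_
  rw [interior_Icc] at hθ
  exact mul_pos (hpos θ) (cos_pos_of_mem_Ioo hθ)

lemma strictAntiOn_wulffCurve_fst (hσ : IsSupportFunction σ) (hpos : ∀ θ, 0 < curvatureRadius σ θ) :
    StrictAntiOn (fun θ => (wulffCurve σ θ).1) (Set.Icc (π / 2) (-(π / 2) + 2 * π)) := by
  have hp := hσ.isClosedCurve_wulffCurve
  refine strictAntiOn_of_hasDerivWithinAt_neg (convex_Icc _ _) hp.continuous.fst.continuousOn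
    (fun θ _ => (hp.hasDerivAt_fst θ).hasDerivWithinAt) fun θ hθ => ?_
  rw [interior_Icc] at hθ
  exact mul_neg_of_pos_of_neg (hpos θ)
    (cos_neg_of_pi_div_two_lt_of_lt hθ.1 (hθ.2.trans_eq (by ring)))

variable {T : ℝ} {x : ℝ → ℝ × ℝ} {g ν : ℝ → ℝ}

lemma integral_arc_le (hσ : IsSupportFunction σ) (hx : IsClosedCurve T x g ν) {α β a b : ℝ}
    (hαβ : α ≤ β) (hab : a ≤ b) (hinj : Set.InjOn (fun θ => (wulffCurve σ θ).1) (Set.Icc α β))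
    (ha : (x a).1 = (wulffCurve σ α).1) (hb : (x b).1 = (wulffCurve σ β).1)
    (hrange : ∀ u ∈ Set.Icc a b, (x u).1 ∈ Set.uIcc (wulffCurve σ α).1 (wulffCurve σ β).1) :
    ∫ u in a..b, (x u).1 * (g u * sin (ν u)) ≤
      (∫ u in a..b, σ (ν u) * g u) +
        ∫ θ in α..β, (wulffCurve σ θ).2 * (curvatureRadius σ θ * cos θ) := by
  have hp := hσ.isClosedCurve_wulffCurve
  have hσc := hσ.continuous
  have hxc := hx.continuous
  have hgc := hx.continuous_speed
  have hνc := hx.continuous_angle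
  obtain ⟨φ, hφ, hφp⟩ := exists_continuous_comp_eqOn_of_injOn isCompact_Icc
    hp.continuous.fst.continuousOn hp.continuous.snd.continuousOn hinj
  have hsubst : ∫ u in a..b, φ (x u).1 * (g u * cos (ν u)) =
      ∫ θ in α..β, (wulffCurve σ θ).2 * (curvatureRadius σ θ * cos θ) := calc
    _ = ∫ z in (x a).1..(x b).1, φ z := intervalIntegral.integral_comp_mul_deriv
          (fun u _ => hx.hasDerivAt_fst u) (by fun_prop) hφ
    _ = ∫ θ in α..β, φ (wulffCurve σ θ).1 * (curvatureRadius σ θ * cos θ) := by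
          rw [ha, hb]
          exact (intervalIntegral.integral_comp_mul_deriv (fun θ _ => hp.hasDerivAt_fst θ)
            (hp.continuous_speed.mul continuous_cos).continuousOn hφ).symm
    _ = _ := by
          refine intervalIntegral.integral_congr fun θ hθ => ?_
          rw [Set.uIcc_of_le hαβ] at hθ
          exact congrArg (· * (curvatureRadius σ θ * cos θ)) (hφp hθ)
  rw [← hsubst, ← intervalIntegral.integral_add (Continuous.intervalIntegrable (by fun_prop) _ _)
    (Continuous.intervalIntegrable (by fun_prop) _ _)]
  refine intervalIntegral.integral_mono_on hab (Continuous.intervalIntegrable (by fun_prop) _ _)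
    (Continuous.intervalIntegrable (by fun_prop) _ _) fun u hu => ?_
  obtain ⟨θ, hθ, hθu⟩ := intermediate_value_uIcc hp.continuous.fst.continuousOn (hrange u hu)
  rw [Set.uIcc_of_le hαβ] at hθ
  have hφu : φ (x u).1 = (wulffCurve σ θ).2 := hθu ▸ hφp hθ
  have hsupport := hσ.wulffCurve_pairing_le θ (ν u)
  rw [show (wulffCurve σ θ).1 = (x u).1 from hθu, ← hφu] at hsupport
  linear_combination mul_le_mul_of_nonneg_right hsupport (hx.speed_nonneg u)

lemma enclosedArea_add_wulffArea_le (hσ : IsSupportFunction σ)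
    (hpos : ∀ θ, 0 < curvatureRadius σ θ) (hx : IsClosedCurve T x g ν) {a b : ℝ} (hab : a ≤ b)
    (hba : b ≤ a + T) (hbounds : ∀ u, (x a).1 ≤ (x u).1 ∧ (x u).1 ≤ (x b).1)
    (ha : (x a).1 = (wulffCurve σ (-(π / 2))).1) (hb : (x b).1 = (wulffCurve σ (π / 2)).1) :
    enclosedArea T x g ν + wulffArea σ ≤ anisotropicLength σ T g ν := by
  have hp := hσ.isClosedCurve_wulffCurve
  have hσc := hσ.continuous
  have hxc := hx.continuous
  have hgc := hx.continuous_speed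
  have hνc := hx.continuous_angle
  have hp_end : (wulffCurve σ (-(π / 2) + 2 * π)).1 = (wulffCurve σ (-(π / 2))).1 :=
    hp.periodic_fst _
  have hlower := hσ.integral_arc_le hx (by linarith [pi_pos]) hab
    (hσ.strictMonoOn_wulffCurve_fst hpos).injOn ha hb
    (fun u _ => by rw [← ha, ← hb]; exact Set.Icc_subset_uIcc (hbounds u))
  have hupper := hσ.integral_arc_le hx (by linarith [pi_pos]) hba
    (hσ.strictAntiOn_wulffCurve_fst hpos).injOn hb
    (by rw [hp_end, hx.periodic a, ha])
    (fun u _ => by rw [hp_end, ← ha, ← hb]; exact Set.Icc_subset_uIcc' (hbounds u))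
  have hdx := periodic_of_hasDerivAt hx.hasDerivAt_snd hx.periodic_snd
  have hdp := periodic_of_hasDerivAt hp.hasDerivAt_fst hp.periodic_fst
  have hareaSplit := integral_add_integral_of_periodic
    (f := fun u => (x u).1 * (g u * sin (ν u))) (by fun_prop) (hx.periodic_fst.mul hdx) a b
  have hlengthSplit := integral_add_integral_of_periodic
    (by fun_prop) (hx.periodic_anisotropicSpeed hσ.periodic) a b
  have hwulffSplit := integral_add_integral_of_periodic
    (hp.continuous.snd.mul (hp.continuous_speed.mul continuous_cos))
    (hp.periodic_snd.mul hdp) (-(π / 2)) (π / 2)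
  have hwulff := hp.enclosedArea_eq_neg_integral_snd
  simp only [Pi.mul_apply, id_eq] at hwulff hwulffSplit
  rw [hx.enclosedArea_eq_integral_fst, ← enclosedArea_wulffCurve, hwulff, anisotropicLength]
  linarith

lemma exists_sq_mul_enclosedArea_add_wulffArea_le (hσ : IsSupportFunction σ)
    (hpos : ∀ θ, 0 < curvatureRadius σ θ) (hT : 0 < T) (hx : IsClosedCurve T x g ν)
    (hA : 0 < enclosedArea T x g ν) :
    ∃ c > 0, c ^ 2 * enclosedArea T x g ν + wulffArea σ ≤ c * anisotropicLength σ T g ν := by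
  obtain ⟨a, b, hab, hba, hbounds⟩ :=
    exists_forall_le_and_le_of_periodic hT hx.continuous.fst hx.periodic_fst
  have hwidth : (x a).1 < (x b).1 := by
    by_contra! hle
    have hconst : ∀ u, (x u).1 = (x b).1 := fun u =>
      le_antisymm (hbounds u).2 (hle.trans (hbounds u).1)
    refine hA.ne' ?_
    rw [hx.enclosedArea_eq_integral_fst]
    simp only [hconst, intervalIntegral.integral_const_mul, hx.integral_speed_mul_sin, mul_zero]
  set l := (wulffCurve σ (-(π / 2))).1 with hl
  set r := (wulffCurve σ (π / 2)).1
  have hlr : l < r := hσ.strictMonoOn_wulffCurve_fst hpos ⟨le_rfl, by linarith [pi_pos]⟩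
    ⟨by linarith [pi_pos], le_rfl⟩ (by linarith [pi_pos])
  set c := (r - l) / ((x b).1 - (x a).1)
  have hc : 0 < c := div_pos (sub_pos.2 hlr) (sub_pos.2 hwidth)
  have hscale : c * ((x b).1 - (x a).1) = r - l := div_mul_cancel₀ _ (sub_pos.2 hwidth).ne'
  have hcurve := hx.smul_add_const hc.le (l - c * (x a).1, 0)
  have hcompare := hσ.enclosedArea_add_wulffArea_le hpos hcurve hab hba
    (fun u => ⟨add_le_add_left (mul_le_mul_of_nonneg_left (hbounds u).1 hc.le) _,
      add_le_add_left (mul_le_mul_of_nonneg_left (hbounds u).2 hc.le) _⟩)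
    (by simp [hl]) (by simp only [Prod.fst_add, Prod.smul_fst, smul_eq_mul]; linarith)
  rw [hx.enclosedArea_smul_add_const hc.le, anisotropicLength_const_mul_speed] at hcompare
  exact ⟨c, hc, hcompare⟩

lemma four_mul_wulffArea_mul_enclosedArea_le (hσ : IsSupportFunction σ)
    (hpos : ∀ θ, 0 < curvatureRadius σ θ) (hT : 0 < T) (hx : IsClosedCurve T x g ν) :
    4 * wulffArea σ * enclosedArea T x g ν ≤ anisotropicLength σ T g ν ^ 2 := by
  have hW := hσ.wulffArea_nonneg
  rcases le_or_gt (enclosedArea T x g ν) 0 with hA | hA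
  · exact (mul_nonpos_of_nonneg_of_nonpos (by positivity) hA).trans (sq_nonneg _)
  obtain ⟨c, hc, hcompare⟩ := hσ.exists_sq_mul_enclosedArea_add_wulffArea_le hpos hT hx hA
  refine le_of_mul_le_mul_left ?_ (pow_pos hc 2)
  calc c ^ 2 * (4 * wulffArea σ * enclosedArea T x g ν)
      = 4 * (c ^ 2 * enclosedArea T x g ν) * wulffArea σ := by ring
    _ ≤ (c ^ 2 * enclosedArea T x g ν + wulffArea σ) ^ 2 := four_mul_le_sq_add _ _
    _ ≤ (c * anisotropicLength σ T g ν) ^ 2 := pow_le_pow_left₀ (by positivity) hcompare 2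
    _ = c ^ 2 * anisotropicLength σ T g ν ^ 2 := mul_pow _ _ _

lemma two_mul_sqrt_mul_add_wulffPerimeter_mul_le (hσ : IsSupportFunction σ) (t : ℝ) :
    (2 * √(π * wulffArea σ) + wulffPerimeter σ) * t ≤ wulffArea (fun θ => σ θ + t) := by
  have hamgm := two_mul_le_add_sq √(wulffArea σ) (√π * t)
  rw [mul_pow, sq_sqrt hσ.wulffArea_nonneg, sq_sqrt pi_pos.le] at hamgm
  rw [hσ.wulffArea_add_const, sqrt_mul pi_pos.le]
  linarith

end IsSupportFunction

theorem mixed_anisoperimetric_inequality_with_length_general {σ : ℝ → ℝ} (hσ : IsSupportFunction σ)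
    {T : ℝ} (hT : 0 < T) {x : ℝ → ℝ × ℝ} {g ν : ℝ → ℝ} (hx : IsClosedCurve T x g ν) :
    (2 * √(π * wulffArea σ) + wulffPerimeter σ) * enclosedArea T x g ν ≤
      anisotropicLength σ T g ν * ∫ u in (0 : ℝ)..T, g u := by
  have hS := hσ.anisotropicLength_nonneg hT.le hx
  have hL : 0 ≤ ∫ u in (0 : ℝ)..T, g u :=
    intervalIntegral.integral_nonneg hT.le fun u _ => hx.speed_nonneg u
  have hP := hσ.wulffPerimeter_nonneg
  rcases le_total (enclosedArea T x g ν) 0 with hA | hA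
  · exact (mul_nonpos_of_nonneg_of_nonpos (by positivity) hA).trans (mul_nonneg hS hL)
  refine le_mul_of_forall_four_mul_le_add_sq hS hL fun t ht => ?_
  have hpos : ∀ θ, 0 < curvatureRadius (fun θ => σ θ + t) θ := fun θ => by
    rw [curvatureRadius_add_const]
    exact add_pos_of_nonneg_of_pos (hσ.curvatureRadius_nonneg θ) ht
  rw [← anisotropicLength_add_const hσ.continuous hx.continuous_speed hx.continuous_angle]
  refine le_trans ?_ ((hσ.add_const ht.le).four_mul_wulffArea_mul_enclosedArea_le hpos hT hx)
  linear_combination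
    4 * mul_le_mul_of_nonneg_right (hσ.two_mul_sqrt_mul_add_wulffPerimeter_mul_le t) hA

/-- Mixed anisoperimetric inequality with `μ ≡ 1`:
`L_σ(Γ)·L(Γ) ≥ (2√(π·|W_σ|) + L(∂W_σ))·A(Γ)` for any closed curve `Γ`. -/
theorem mixed_anisoperimetric_inequality_with_length
    (σ : ℝ → ℝ)
    (hσs : ContDiff ℝ (⊤ : ℕ∞) σ) (hσper : ∀ ν, σ (ν + 2 * π) = σ ν)
    (hσpos : ∀ ν, 0 < σ ν) (hσconv : ∀ ν, 0 < σ ν + deriv (deriv σ) ν)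
    -- a closed curve `x` with speed `g` and tangent-angle lift `ν`
    (x : ℝ → ℝ × ℝ) (g ν : ℝ → ℝ)
    (hx : ContDiff ℝ 2 x)
    (hxper : ∀ u, x (u + 1) = x u)
    (hg : ∀ u, 0 < g u)
    (htang : ∀ u, HasDerivAt x (g u • ((Real.cos (ν u), Real.sin (ν u)) : ℝ × ℝ)) u)
    (hνc : Continuous ν)
    (hνper : ∀ u, ν (u + 1) = ν u + 2 * π)
    (hinj : Set.InjOn x (Set.Ico 0 1))
    -- positive enclosed area
    (hA : 0 < (1 / 2) * ∫ u in (0:ℝ)..1,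
        ((x u).1 * (g u * Real.sin (ν u)) - (x u).2 * (g u * Real.cos (ν u)))) :
    (∫ u in (0:ℝ)..1, σ (ν u) * g u) * (∫ u in (0:ℝ)..1, g u) ≥
      (2 * Real.sqrt (π * wulffArea σ) + wulffPerimeter σ) *
        ((1 / 2) * ∫ u in (0:ℝ)..1,
          ((x u).1 * (g u * Real.sin (ν u)) - (x u).2 * (g u * Real.cos (ν u)))) := by
  have hσ : IsSupportFunction σ := ⟨contDiff_infty.1 hσs 2, hσper, fun θ => (hσconv θ).le⟩
  have hgc := continuous_speed_of_contDiff (hx.of_le one_le_two) hνc htang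
  exact mixed_anisoperimetric_inequality_with_length_general hσ one_pos
    ⟨hgc, hνc, fun u => (hg u).le, htang, hxper⟩
end
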